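/- Let λ be a left-infinite word and ρ a right-infinite word over a finite alphabet A. The set ROG_{λ,ρ} = {rog_{λ,ρ}(n) : n ∈ ℕ} is finite if and only if there exist finite words u, w₁, w₂ over A (with u nonempty) such that λ = ∞u·w₁ = ⋯uuuw₁ and ρ = w₂·u∞ = w₂uuu⋯. -/

import Mathlib

/-- The suffix of length `n` of the left-infinite word `⋯ (lam 2)(lam 1)(lam 0)`. -/
def lSuffix {A : Type*} (lam : ℕ → A) (n : ℕ) : List A := (List.range n).reverse.map lam

/-- The prefix of length `n` of the right-infinite word `(rho 0)(rho 1)(rho 2) ⋯`. -/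
def rPrefix {A : Type*} (rho : ℕ → A) (n : ℕ) : List A := (List.range n).map rho

/-- The left overlap gap between two finite words. -/
noncomputable def logGap {A : Type*} (u v : List A) : ℕ :=
  sInf {n | ∃ x x' : List A, x.length = n ∧ x'.length = n ∧ u ++ x = x' ++ v}

/-- The right overlap gap between two finite words. -/
noncomputable def rogGap {A : Type*} (u v : List A) : ℕ :=
  sInf {n | ∃ x x' : List A, x.length = n ∧ x'.length = n ∧ x ++ u = v ++ x'}

/-- The overlap gap between two finite words. -/
noncomputable def ogGap {A : Type*} (u v : List A) : ℕ := min (logGap u v) (rogGap u v)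

/-- `lam` is the left-infinite word `∞u·w = ⋯uuuw`. -/
def IsLeftUP {A : Type*} (lam : ℕ → A) (u w : List A) : Prop :=
  ∀ k : ℕ, lSuffix lam (w.length + k * u.length) = (List.replicate k u).flatten ++ w

/-- `rho` is the right-infinite word `w·u∞ = wuuu⋯`. -/
def IsRightUP {A : Type*} (rho : ℕ → A) (w u : List A) : Prop :=
  ∀ k : ℕ, rPrefix rho (w.length + k * u.length) = w ++ (List.replicate k u).flatten

/-!
The equation `x λₙ = ρₙ x'` with `|x| = m ≤ n` says that, once `m` letters are removed from the end
of `λ` and from the beginning of `ρ`, the suffix of length `n - m` of the former equals the prefix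
of length `n - m` of the latter.

Suppose `M` bounds all the gaps, and let `S` be the set of lengths at which `λ` and `ρ` agree in
this way after losing `M` letters each. Then `S` meets every interval `[N, N + M]`, so some fixed
`d > 0` is the difference of two members of `S` infinitely often. Agreement at lengths `s` and
`s + d` composes two reflections into a translation by `d`, so both words are `d`-periodic, and one
more member of `S` identifies their periods.

Conversely, if `λ = ∞u·w₁` and `ρ = w₂·u∞`, the words without `w₁` and `w₂` agree at every multiple
of `|u|`, and rounding `n` up to such a multiple costs at most `|u|` letters.
-/

open Filter

/-- The infinite word `(x a)(x (a + 1))⋯` left when the `a` letters of `x` nearest the origin are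
removed; for a left-infinite word these are its last `a` letters, for a right-infinite word its
first `a` letters. -/
def wordTail {A : Type*} (x : ℕ → A) (a : ℕ) : ℕ → A := fun i => x (i + a)

section InfiniteWords

variable {A : Type*} {x y : ℕ → A}

theorem wordTail_wordTail (x : ℕ → A) (a b : ℕ) :
    wordTail (wordTail x a) b = wordTail x (a + b) :=
  funext fun i => congrArg x (by omega)

theorem periodic_wordTail {d : ℕ} (h : Function.Periodic x d) (a : ℕ) :
    Function.Periodic (wordTail x a) d := fun i => by
  simp only [wordTail, Nat.add_right_comm i d a, h (i + a)]

@[simp]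
theorem length_rPrefix (x : ℕ → A) (n : ℕ) : (rPrefix x n).length = n := by simp [rPrefix]

@[simp]
theorem length_lSuffix (x : ℕ → A) (n : ℕ) : (lSuffix x n).length = n := by simp [lSuffix]

theorem lSuffix_eq_reverse_rPrefix (x : ℕ → A) (n : ℕ) : lSuffix x n = (rPrefix x n).reverse := by
  simp [lSuffix, rPrefix, List.map_reverse]

theorem rPrefix_add (x : ℕ → A) (m n : ℕ) :
    rPrefix x (m + n) = rPrefix x m ++ rPrefix (wordTail x m) n := by
  simp [rPrefix, wordTail, List.range_add, Function.comp_def, Nat.add_comm]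

theorem drop_rPrefix (x : ℕ → A) (m n : ℕ) :
    (rPrefix x n).drop m = rPrefix (wordTail x m) (n - m) := by
  refine List.ext_getElem (by simp) fun i _ _ => ?_
  simp [rPrefix, wordTail, Nat.add_comm]

theorem take_lSuffix (x : ℕ → A) (m n : ℕ) :
    (lSuffix x n).take (n - m) = lSuffix (wordTail x m) (n - m) := by
  rw [lSuffix_eq_reverse_rPrefix, lSuffix_eq_reverse_rPrefix, ← drop_rPrefix, List.reverse_drop,
    length_rPrefix]

theorem rPrefix_eq_rPrefix_iff {n : ℕ} : rPrefix x n = rPrefix y n ↔ ∀ i < n, x i = y i := by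
  simp [rPrefix]

theorem lSuffix_eq_rPrefix_iff {n : ℕ} :
    lSuffix x n = rPrefix y n ↔ ∀ i j, i + j + 1 = n → x i = y j := by
  constructor
  · intro h i j hij
    have hj : (lSuffix x n)[j]? = (rPrefix y n)[j]? := by rw [h]
    obtain ⟨hjn, hi⟩ : j < n ∧ n - 1 - j = i := by omega
    simpa [lSuffix, rPrefix, hjn, hi] using hj
  · intro h
    refine List.ext_getElem (by simp) fun j hj _ => ?_
    rw [length_lSuffix] at hj
    simpa [lSuffix, rPrefix] using h (n - 1 - j) j (by omega)

theorem lSuffix_eq_rPrefix_comm {n : ℕ} :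
    lSuffix x n = rPrefix y n ↔ lSuffix y n = rPrefix x n := by
  rw [lSuffix_eq_reverse_rPrefix, lSuffix_eq_reverse_rPrefix, List.reverse_eq_iff, eq_comm]

theorem lSuffix_wordTail_eq_rPrefix_wordTail {n k a b : ℕ} (h : lSuffix x n = rPrefix y n)
    (hk : k = n - (a + b)) : lSuffix (wordTail x a) k = rPrefix (wordTail y b) k :=
  lSuffix_eq_rPrefix_iff.2 fun i j hij =>
    lSuffix_eq_rPrefix_iff.1 h (i + a) (j + b) (by omega)

theorem periodic_of_frequently_lSuffix_eq_rPrefix {d : ℕ}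
    (h : ∃ᶠ s in atTop, lSuffix x s = rPrefix y s ∧ lSuffix x (s + d) = rPrefix y (s + d)) :
    Function.Periodic y d := by
  intro i
  obtain ⟨s, his, hs, hsd⟩ := frequently_atTop'.1 h i
  have hshift : rPrefix (wordTail y d) s = rPrefix y s := by
    rw [← hs]
    exact (lSuffix_wordTail_eq_rPrefix_wordTail (a := 0) hsd (by omega)).symm
  exact rPrefix_eq_rPrefix_iff.1 hshift i his

end InfiniteWords

section OverlapGap

variable {A : Type*} {u v : List A}

theorem exists_append_eq_append_iff {m : ℕ} (huv : u.length = v.length) (hm : m ≤ u.length) :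
    (∃ x x' : List A, x.length = m ∧ x'.length = m ∧ x ++ u = v ++ x') ↔
      u.take (u.length - m) = v.drop m := by
  constructor
  · rintro ⟨x, x', rfl, -, h⟩
    have hu : u = v.drop x.length ++ x' := by
      rw [← List.drop_append_of_le_length (huv ▸ hm), ← h, List.drop_left]
    have hlen : u.length - x.length = (v.drop x.length).length := by rw [List.length_drop, huv]
    rw [hlen, hu, List.take_left]
  · intro h
    refine ⟨v.take m, u.drop (u.length - m), List.length_take_of_le (huv ▸ hm),
      by rw [List.length_drop, Nat.sub_sub_self hm], ?_⟩
    calc v.take m ++ u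
        = v.take m ++ (u.take (u.length - m) ++ u.drop (u.length - m)) := by
          rw [List.take_append_drop]
      _ = v ++ u.drop (u.length - m) := by rw [h, ← List.append_assoc, List.take_append_drop]

theorem rogGap_le_length (huv : u.length = v.length) : rogGap u v ≤ u.length :=
  Nat.sInf_le ⟨v, u, huv.symm, rfl, rfl⟩

theorem rogGap_le_of_take_eq_drop {m : ℕ} (huv : u.length = v.length)
    (h : u.take (u.length - m) = v.drop m) : rogGap u v ≤ m := by
  rcases le_total m u.length with hm | hm
  · exact Nat.sInf_le ((exists_append_eq_append_iff huv hm).2 h)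
  · exact (rogGap_le_length huv).trans hm

theorem take_eq_drop_rogGap (huv : u.length = v.length) :
    u.take (u.length - rogGap u v) = v.drop (rogGap u v) := by
  have hmem := Nat.sInf_mem (s := {n | ∃ x x' : List A, x.length = n ∧ x'.length = n ∧
    x ++ u = v ++ x'}) ⟨u.length, v, u, huv.symm, rfl, rfl⟩
  exact (exists_append_eq_append_iff huv (rogGap_le_length huv)).1 hmem

variable {lam rho : ℕ → A} {m n : ℕ}

theorem rogGap_lSuffix_rPrefix_le
    (h : lSuffix (wordTail lam m) (n - m) = rPrefix (wordTail rho m) (n - m)) :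
    rogGap (lSuffix lam n) (rPrefix rho n) ≤ m :=
  rogGap_le_of_take_eq_drop (by simp) (by rw [length_lSuffix, take_lSuffix, drop_rPrefix, h])

theorem lSuffix_wordTail_rogGap_eq (hm : rogGap (lSuffix lam n) (rPrefix rho n) = m) :
    lSuffix (wordTail lam m) (n - m) = rPrefix (wordTail rho m) (n - m) := by
  have h := take_eq_drop_rogGap (u := lSuffix lam n) (v := rPrefix rho n) (by simp)
  rwa [hm, length_lSuffix, take_lSuffix, drop_rPrefix] at h

end OverlapGap

section UltimatelyPeriodic

variable {A : Type*} {lam rho : ℕ → A} {u w w₁ w₂ : List A}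

theorem isLeftUP_iff_isRightUP_reverse :
    IsLeftUP lam u w ↔ IsRightUP lam w.reverse u.reverse := by
  refine forall_congr' fun k => ?_
  rw [lSuffix_eq_reverse_rPrefix, List.reverse_eq_iff]
  simp [List.reverse_flatten]

theorem IsRightUP.rPrefix_wordTail (h : IsRightUP rho w u) (k : ℕ) :
    rPrefix (wordTail rho w.length) (k * u.length) = (List.replicate k u).flatten := by
  have hw : rPrefix rho w.length = w := by simpa using h 0
  have hk := h k
  rw [rPrefix_add, hw] at hk
  exact List.append_cancel_left hk

theorem IsLeftUP.lSuffix_wordTail (h : IsLeftUP lam u w) (k : ℕ) :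
    lSuffix (wordTail lam w.length) (k * u.length) = (List.replicate k u).flatten := by
  have hk := (isLeftUP_iff_isRightUP_reverse.1 h).rPrefix_wordTail k
  rw [List.length_reverse, List.length_reverse] at hk
  rw [lSuffix_eq_reverse_rPrefix, hk]
  simp [List.reverse_flatten]

theorem isRightUP_of_periodic_wordTail {a d : ℕ} (h : Function.Periodic (wordTail rho a) d) :
    IsRightUP rho (rPrefix rho a) (rPrefix (wordTail rho a) d) := by
  have hshift : wordTail (wordTail rho a) d = wordTail rho a := funext h
  intro k
  rw [length_rPrefix, length_rPrefix, rPrefix_add]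
  congr 1
  induction k with
  | zero => simp [rPrefix]
  | succ k ih =>
    rw [Nat.succ_mul, Nat.add_comm, rPrefix_add, hshift, ih, List.replicate_succ,
      List.flatten_cons]

theorem isLeftUP_of_periodic_wordTail {b d : ℕ} (h : Function.Periodic (wordTail lam b) d) :
    IsLeftUP lam (lSuffix (wordTail lam b) d) (lSuffix lam b) := by
  rw [isLeftUP_iff_isRightUP_reverse, lSuffix_eq_reverse_rPrefix, lSuffix_eq_reverse_rPrefix,
    List.reverse_reverse, List.reverse_reverse]
  exact isRightUP_of_periodic_wordTail h

theorem rogGap_le_of_isLeftUP_of_isRightUP (hu : u ≠ []) (hlam : IsLeftUP lam u w₁)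
    (hrho : IsRightUP rho w₂ u) (n : ℕ) :
    rogGap (lSuffix lam n) (rPrefix rho n) ≤ w₁.length + w₂.length + u.length := by
  obtain ⟨t, htu, k, htk⟩ : ∃ t ≤ u.length, ∃ k, n + t = k * u.length := by
    have hmod := Nat.mod_lt n (List.length_pos_iff.2 hu)
    have hdiv := Nat.div_add_mod' n u.length
    exact ⟨u.length - n % u.length, Nat.sub_le _ _, n / u.length + 1, by
      rw [Nat.succ_mul]; omega⟩
  have hmirror : lSuffix (wordTail lam w₁.length) (n + t) =
      rPrefix (wordTail rho w₂.length) (n + t) := by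
    rw [htk, hlam.lSuffix_wordTail, hrho.rPrefix_wordTail]
  have hgap : rogGap (lSuffix lam n) (rPrefix rho n) ≤ w₁.length + w₂.length + t := by
    have htrim := lSuffix_wordTail_eq_rPrefix_wordTail
      (k := n - (w₁.length + w₂.length + t)) (a := w₂.length + t) (b := w₁.length + t) hmirror
      (by omega)
    rw [wordTail_wordTail, wordTail_wordTail, ← Nat.add_assoc, ← Nat.add_assoc,
      Nat.add_comm w₂.length w₁.length] at htrim
    exact rogGap_lSuffix_rPrefix_le htrim
  exact hgap.trans (Nat.add_le_add_left htu _)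

end UltimatelyPeriodic

theorem exists_pos_frequently_mem_and_add_mem {S : Set ℕ} {M : ℕ}
    (hS : ∀ N, ∃ s ∈ S, N ≤ s ∧ s ≤ N + M) :
    ∃ d > 0, ∃ᶠ s in atTop, s ∈ S ∧ s + d ∈ S := by
  have hgap : ∃ᶠ s in atTop, ∃ d ∈ Finset.Icc 1 (M + 1), s ∈ S ∧ s + d ∈ S := by
    refine frequently_atTop.2 fun N => ?_
    obtain ⟨s, hsS, hNs, -⟩ := hS N
    obtain ⟨s', hsS', hss', hs'M⟩ := hS (s + 1)
    refine ⟨s, hNs, s' - s, Finset.mem_Icc.2 (by omega), hsS, ?_⟩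
    rwa [Nat.add_sub_cancel' (by omega)]
  obtain ⟨d, hd, hfreq⟩ := (frequently_exists_finset _).1 hgap
  exact ⟨d, (Finset.mem_Icc.1 hd).1, hfreq⟩

section BoundedGap

variable {A : Type*} {lam rho : ℕ → A} {M : ℕ}

theorem exists_lSuffix_wordTail_eq_of_rogGap_le
    (hM : ∀ n, rogGap (lSuffix lam n) (rPrefix rho n) ≤ M) (N : ℕ) :
    ∃ s, lSuffix (wordTail lam M) s = rPrefix (wordTail rho M) s ∧ N ≤ s ∧ s ≤ N + M := by
  obtain ⟨g, hg⟩ : ∃ g, rogGap (lSuffix lam (N + 2 * M)) (rPrefix rho (N + 2 * M)) = g := ⟨_, rfl⟩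
  have hgM : g ≤ M := hg ▸ hM _
  have htrim := lSuffix_wordTail_eq_rPrefix_wordTail (k := N + g) (a := M - g) (b := M - g)
    (lSuffix_wordTail_rogGap_eq hg) (by omega)
  rw [wordTail_wordTail, wordTail_wordTail, Nat.add_sub_cancel' hgM] at htrim
  exact ⟨N + g, htrim, by omega, by omega⟩

theorem exists_isLeftUP_isRightUP_of_rogGap_le
    (hM : ∀ n, rogGap (lSuffix lam n) (rPrefix rho n) ≤ M) :
    ∃ u w₁ w₂ : List A, u ≠ [] ∧ IsLeftUP lam u w₁ ∧ IsRightUP rho w₂ u := by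
  obtain ⟨d, hd, hfreq⟩ := exists_pos_frequently_mem_and_add_mem
    (S := {s | lSuffix (wordTail lam M) s = rPrefix (wordTail rho M) s})
    (exists_lSuffix_wordTail_eq_of_rogGap_le hM)
  have hrho : Function.Periodic (wordTail rho M) d :=
    periodic_of_frequently_lSuffix_eq_rPrefix hfreq
  have hlam : Function.Periodic (wordTail lam M) d :=
    periodic_of_frequently_lSuffix_eq_rPrefix
      (hfreq.mono fun s => And.imp lSuffix_eq_rPrefix_comm.1 lSuffix_eq_rPrefix_comm.1)
  obtain ⟨s, hs, hds, -⟩ := exists_lSuffix_wordTail_eq_of_rogGap_le hM d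
  have hlam' : Function.Periodic (wordTail lam (M + (s - d))) d := by
    rw [← wordTail_wordTail]
    exact periodic_wordTail hlam (s - d)
  have hword : lSuffix (wordTail lam (M + (s - d))) d = rPrefix (wordTail rho M) d := by
    rw [← wordTail_wordTail]
    exact lSuffix_wordTail_eq_rPrefix_wordTail (b := 0) hs (by omega)
  refine ⟨rPrefix (wordTail rho M) d, _, _, ?_, hword ▸ isLeftUP_of_periodic_wordTail hlam',
    isRightUP_of_periodic_wordTail hrho⟩
  exact List.ne_nil_of_length_pos (by rwa [length_rPrefix])

end BoundedGap

theorem rog_finite_iff_general {A : Type*} (lam rho : ℕ → A) :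
    (Set.range fun n => rogGap (lSuffix lam n) (rPrefix rho n)).Finite ↔
      ∃ u w₁ w₂ : List A, u ≠ [] ∧ IsLeftUP lam u w₁ ∧ IsRightUP rho w₂ u := by
  rw [Set.finite_iff_bddAbove]
  constructor
  · rintro ⟨M, hM⟩
    exact exists_isLeftUP_isRightUP_of_rogGap_le fun n => hM ⟨n, rfl⟩
  · rintro ⟨u, w₁, w₂, hu, hlam, hrho⟩
    exact ⟨_, Set.forall_mem_range.2 (rogGap_le_of_isLeftUP_of_isRightUP hu hlam hrho)⟩

/-- `ROG_{λ,ρ}` is finite iff `λ = ∞u·w₁` and `ρ = w₂·u∞` for some words `u, w₁, w₂`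
with `u` nonempty. -/
theorem rog_finite_iff {A : Type*} [Fintype A] [Nonempty A] (lam rho : ℕ → A) :
    (Set.range fun n => rogGap (lSuffix lam n) (rPrefix rho n)).Finite ↔
      ∃ u w₁ w₂ : List A, u ≠ [] ∧ IsLeftUP lam u w₁ ∧ IsRightUP rho w₂ u :=
  rog_finite_iff_general lam rho
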